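/- Fix b, h > 0 and 0 < λ < 1 ≤ M, and let ρ = b/(b+h). For every Borel measurable policy π : ℝ^N → [0, M] acting on N censored samples, the supremum over demand distributions G ∈ 𝒢 with G⁻(λ) < ρ of E_{D_1,…,D_N i.i.d. ∼ G}[ Regret_G(π(min(D_1,λ), …, min(D_N,λ))) − Δ_G ] is at least h·(M−λ)·√(1−ρ)·min(ρ, 1−ρ)·min(ρ, 3ρ−1)·e^{−1/2} / (64·√N). -/

import Mathlib

open MeasureTheory Set

/-- Newsvendor cost of ordering quantity `q` under demand distribution `F`,
with underage cost `b` and overage cost `h`. -/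
noncomputable def nvCost (b h : ℝ) (F : Measure ℝ) (q : ℝ) : ℝ :=
  ∫ x, (b * max (x - q) 0 + h * max (q - x) 0) ∂F

/-- Optimal newsvendor quantity: the `ρ`-th quantile of `F`. -/
noncomputable def qStar (ρ : ℝ) (F : Measure ℝ) : ℝ :=
  sInf {q : ℝ | ρ ≤ (F (Iic q)).toReal}

/-- The set `𝒢` of admissible demand distributions: Borel probability measures on ℝ
supported on `[0, ∞)` with finite mean and optimal newsvendor quantity at most `M`. -/
def GoodDist (ρ M : ℝ) : Set (Measure ℝ) :=
  {F | IsProbabilityMeasure F ∧ F (Iio 0) = 0 ∧ Integrable id F ∧ qStar ρ F ≤ M}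

/-- The ambiguity set `𝒜_λ`: all admissible distributions agreeing with `G` before `lam`. -/
def Ambig (ρ M : ℝ) (G : Measure ℝ) (lam : ℝ) : Set (Measure ℝ) :=
  {F | F ∈ GoodDist ρ M ∧ ∀ x < lam, F (Iic x) = G (Iic x)}

/-- Worst-case regret of an ordering quantity `q` over the ambiguity set. -/
noncomputable def Regret (b h ρ M : ℝ) (G : Measure ℝ) (lam q : ℝ) : ℝ :=
  sSup ((fun F => nvCost b h F q - nvCost b h F (qStar ρ F)) '' Ambig ρ M G lam)

/-- Minimax risk `Δ`. -/
noncomputable def Risk (b h ρ M : ℝ) (G : Measure ℝ) (lam : ℝ) : ℝ :=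
  sInf (Regret b h ρ M G lam '' Icc 0 M)

/-- The unidentifiable ordering quantity `q†_G`. -/
noncomputable def qDagger (b h M : ℝ) (G : Measure ℝ) (lam : ℝ) : ℝ :=
  (b * M + h * lam - (b + h) * (G (Iio lam)).toReal * M) /
    ((b + h) * (1 - (G (Iio lam)).toReal))

/-- The two-point-tail distribution `F_p`: agrees with `G` on `[0, λ)`, places an atom
of mass `p` at `λ` and an atom of mass `1 - p - G⁻(λ)` at `M`. -/
noncomputable def Fp (G : Measure ℝ) (lam M p : ℝ) : Measure ℝ :=
  G.restrict (Iio lam) + ENNReal.ofReal p • Measure.dirac lam +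
    ENNReal.ofReal (1 - p - (G (Iio lam)).toReal) • Measure.dirac M

/-- The `N`-fold product (i.i.d.) measure of `G` (equal to `Measure.pi` whenever `G`
is sigma-finite, in particular for probability measures). -/
noncomputable def iidPi (N : ℕ) (G : Measure ℝ) : Measure (Fin N → ℝ) := by
  classical
  exact if h : SigmaFinite G then
    haveI := h
    Measure.pi fun _ => G
  else 0


lemma nv_integrable (b h : ℝ) (F : Measure ℝ) [IsProbabilityMeasure F] (hF : Integrable id F)
    (q : ℝ) : Integrable (fun x => b * max (x - q) 0 + h * max (q - x) 0) F := by
  have h1 : Integrable (fun x : ℝ => x - q) F := hF.sub (integrable_const q)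
  have h2 : Integrable (fun x : ℝ => q - x) F := (integrable_const q).sub hF
  exact (h1.pos_part.const_mul b).add (h2.pos_part.const_mul h)

lemma nv_diff_le (b h : ℝ) (F : Measure ℝ) [IsProbabilityMeasure F] (hF : Integrable id F)
    (q q' : ℝ) (g : ℝ → ℝ) (hg : Integrable g F)
    (hle : ∀ x, (b * max (x - q) 0 + h * max (q - x) 0)
      - (b * max (x - q') 0 + h * max (q' - x) 0) ≤ g x) :
    nvCost b h F q - nvCost b h F q' ≤ ∫ x, g x ∂F := by
  unfold nvCost
  rw [← integral_sub (nv_integrable b h F hF q) (nv_integrable b h F hF q')]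
  exact integral_mono ((nv_integrable b h F hF q).sub (nv_integrable b h F hF q')) hg hle

lemma nv_pt_up {b h : ℝ} (hb : 0 < b) (hh : 0 < h) {q q' : ℝ} (hq : q' ≤ q) (x : ℝ) :
    (b * max (x - q) 0 + h * max (q - x) 0)
      - (b * max (x - q') 0 + h * max (q' - x) 0) ≤ h * (q - q') := by
  rcases max_cases (x - q) 0 with ⟨e1, _⟩ | ⟨e1, _⟩ <;>
  rcases max_cases (q - x) 0 with ⟨e2, _⟩ | ⟨e2, _⟩ <;>
  rcases max_cases (x - q') 0 with ⟨e3, _⟩ | ⟨e3, _⟩ <;>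
  rcases max_cases (q' - x) 0 with ⟨e4, _⟩ | ⟨e4, _⟩ <;>
  rw [e1, e2, e3, e4] <;> nlinarith

lemma nv_pt_down {b h : ℝ} (hb : 0 < b) (hh : 0 < h) {q q' : ℝ} (hq : q ≤ q') (x : ℝ) :
    (b * max (x - q) 0 + h * max (q - x) 0)
      - (b * max (x - q') 0 + h * max (q' - x) 0)
      ≤ b * (q' - q) + (Iic q).indicator (fun _ => -((b + h) * (q' - q))) x := by
  by_cases hx : x ≤ q
  · rw [indicator_of_mem (by exact hx)]
    rw [max_eq_right (by linarith), max_eq_left (by linarith), max_eq_right (by linarith),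
      max_eq_left (by linarith)]
    linarith
  · rw [indicator_of_notMem (by simpa using hx)]
    push Not at hx
    rw [max_eq_left (by linarith : (0:ℝ) ≤ x - q), max_eq_right (by linarith : q - x ≤ 0)]
    rcases max_cases (x - q') 0 with ⟨e3, _⟩ | ⟨e3, _⟩ <;>
    rcases max_cases (q' - x) 0 with ⟨e4, _⟩ | ⟨e4, _⟩ <;>
    rw [e3, e4] <;> nlinarith

lemma nv_up {b h : ℝ} (hb : 0 < b) (hh : 0 < h) (F : Measure ℝ) [IsProbabilityMeasure F]
    (hF : Integrable id F) {q q' : ℝ} (hq : q' ≤ q) :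
    nvCost b h F q - nvCost b h F q' ≤ h * (q - q') := by
  have := nv_diff_le b h F hF q q' (fun _ => h * (q - q')) (integrable_const _)
    (nv_pt_up hb hh hq)
  simpa using this

lemma nv_down {b h : ℝ} (hb : 0 < b) (hh : 0 < h) (F : Measure ℝ) [IsProbabilityMeasure F]
    (hF : Integrable id F) {q q' : ℝ} (hq : q ≤ q') :
    nvCost b h F q - nvCost b h F q' ≤ (b - (b + h) * (F (Iic q)).toReal) * (q' - q) := by
  have hi : Integrable ((Iic q).indicator (fun _ : ℝ => -((b + h) * (q' - q)))) F :=
    (integrable_const _).indicator measurableSet_Iic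
  have := nv_diff_le b h F hF q q' _ ((integrable_const (b * (q' - q))).add hi)
    (nv_pt_down hb hh hq)
  simp only [Pi.add_apply] at this
  rw [integral_add (integrable_const _) hi, integral_indicator_const _ measurableSet_Iic] at this
  simp [Measure.real] at this
  linarith

lemma nv_abs {b h : ℝ} (hb : 0 < b) (hh : 0 < h) (F : Measure ℝ) [IsProbabilityMeasure F]
    (hF : Integrable id F) {M q q' : ℝ} (hq : q ∈ Icc 0 M) (hq' : q' ∈ Icc 0 M) :
    nvCost b h F q - nvCost b h F q' ≤ (b + h) * M := by
  obtain ⟨a1, a2⟩ := hq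
  obtain ⟨a3, a4⟩ := hq'
  rcases le_total q q' with hle | hle
  · refine (nv_down hb hh F hF hle).trans ?_
    have : 0 ≤ (F (Iic q)).toReal := ENNReal.toReal_nonneg
    have h2 : (b - (b + h) * (F (Iic q)).toReal) ≤ b := by nlinarith
    nlinarith [mul_le_mul_of_nonneg_right h2 (sub_nonneg.2 hle)]
  · refine (nv_up hb hh F hF hle).trans ?_
    nlinarith

lemma qStar_mem {ρ M : ℝ} (hρ : 0 < ρ) {F : Measure ℝ} (hF : F ∈ GoodDist ρ M) :
    qStar ρ F ∈ Icc 0 M := by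
  refine ⟨?_, hF.2.2.2⟩
  apply Real.sInf_nonneg
  intro q hq
  by_contra hlt
  push Not at hlt
  have : F (Iic q) = 0 := measure_mono_null (fun x hx => lt_of_le_of_lt hx hlt) hF.2.1
  simp only [mem_ofPred_eq, this] at hq
  simp at hq
  linarith

lemma reg_bdd {b h ρ M lam q : ℝ} (hb : 0 < b) (hh : 0 < h) (hρ : 0 < ρ) (G : Measure ℝ)
    (hq : q ∈ Icc 0 M) : ∀ r ∈ (fun F => nvCost b h F q - nvCost b h F (qStar ρ F)) ''
      Ambig ρ M G lam, |r| ≤ (b + h) * M := by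
  rintro _ ⟨F, hF, rfl⟩
  have hg := hF.1
  have := hg.1
  have hm := qStar_mem hρ hg
  rw [abs_le]
  have h1 := nv_abs hb hh F hg.2.2.1 hq hm
  have h2 := nv_abs hb hh F hg.2.2.1 hm hq
  constructor
  · simp only; linarith
  · exact h1

lemma reg_bddAbove {b h ρ M lam q : ℝ} (hb : 0 < b) (hh : 0 < h) (hρ : 0 < ρ) (G : Measure ℝ)
    (hq : q ∈ Icc 0 M) : BddAbove ((fun F => nvCost b h F q - nvCost b h F (qStar ρ F)) ''
      Ambig ρ M G lam) :=
  ⟨(b + h) * M, fun r hr => (abs_le.1 (reg_bdd hb hh hρ G hq r hr)).2⟩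

lemma Regret_abs {b h ρ M lam q : ℝ} (hb : 0 < b) (hh : 0 < h) (hρ : 0 < ρ) {G : Measure ℝ}
    (hG : G ∈ GoodDist ρ M) (hq : q ∈ Icc 0 M) : |Regret b h ρ M G lam q| ≤ (b + h) * M := by
  have hmem : nvCost b h G q - nvCost b h G (qStar ρ G) ∈
    ((fun F => nvCost b h F q - nvCost b h F (qStar ρ F)) '' Ambig ρ M G lam) :=
    ⟨G, ⟨hG, fun _ _ => rfl⟩, rfl⟩
  rw [abs_le]
  constructor
  · exact (abs_le.1 (reg_bdd hb hh hρ G hq _ hmem)).1.trans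
      (le_csSup (reg_bddAbove hb hh hρ G hq) hmem)
  · exact csSup_le ⟨_, hmem⟩ fun r hr => (abs_le.1 (reg_bdd hb hh hρ G hq r hr)).2

lemma Risk_le {b h ρ M lam q : ℝ} (hb : 0 < b) (hh : 0 < h) (hρ : 0 < ρ) {G : Measure ℝ}
    (hG : G ∈ GoodDist ρ M) (hq : q ∈ Icc 0 M) :
    Risk b h ρ M G lam ≤ Regret b h ρ M G lam q := by
  apply csInf_le
  · refine ⟨-((b + h) * M), ?_⟩
    rintro _ ⟨q, hq, rfl⟩
    exact (abs_le.1 (Regret_abs hb hh hρ hG hq)).1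
  · exact ⟨q, hq, rfl⟩

lemma Risk_ge {b h ρ M lam : ℝ} (hb : 0 < b) (hh : 0 < h) (hρ : 0 < ρ) (hM : 0 ≤ M)
    {G : Measure ℝ} (hG : G ∈ GoodDist ρ M) :
    -((b + h) * M) ≤ Risk b h ρ M G lam := by
  apply le_csInf
  · exact ⟨_, 0, ⟨le_rfl, hM⟩, rfl⟩
  · rintro _ ⟨q, hq, rfl⟩
    exact (abs_le.1 (Regret_abs hb hh hρ hG hq)).1

/-- two-point distribution: mass `p` at `0`, `1-p` at `z`. -/
noncomputable def TP (p z : ℝ) : Measure ℝ :=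
  ENNReal.ofReal p • Measure.dirac 0 + ENNReal.ofReal (1 - p) • Measure.dirac z

lemma TP_prob {p z : ℝ} (h0 : 0 ≤ p) (h1 : p ≤ 1) : IsProbabilityMeasure (TP p z) := by
  constructor
  simp [TP]
  rw [← ENNReal.ofReal_add h0 (by linarith)]
  simp

lemma TP_integrable (p z : ℝ) (f : ℝ → ℝ) : Integrable f (TP p z) := by
  refine Integrable.add_measure ?_ ?_ <;>
  exact (integrable_dirac (by simp)).smul_measure (by simp)

lemma TP_integral {p z : ℝ} (h0 : 0 ≤ p) (h1 : p ≤ 1) (f : ℝ → ℝ) :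
    ∫ x, f x ∂(TP p z) = p * f 0 + (1 - p) * f z := by
  unfold TP
  rw [integral_add_measure, integral_smul_measure, integral_smul_measure, integral_dirac,
    integral_dirac, ENNReal.toReal_ofReal h0, ENNReal.toReal_ofReal (by linarith)]
  · simp
  all_goals exact (integrable_dirac (by simp)).smul_measure (by simp)

lemma TP_Iic_lt {p z x : ℝ} (hx0 : x < 0) (hz : 0 < z) : TP p z (Iic x) = 0 := by
  have : ¬ (0 ≤ x) := by linarith
  have : ¬ (z ≤ x) := by linarith
  simp [TP, *]

lemma TP_Iic_mid {p z x : ℝ} (hx0 : 0 ≤ x) (hz : x < z) :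
    TP p z (Iic x) = ENNReal.ofReal p := by
  have : ¬ (z ≤ x) := by linarith
  simp [TP, *]

lemma TP_Iic_ge {p z x : ℝ} (h0 : 0 ≤ p) (h1 : p ≤ 1) (hz : 0 < z) (hx : z ≤ x) :
    TP p z (Iic x) = 1 := by
  have : 0 ≤ x := by linarith
  simp [TP, *]
  rw [← ENNReal.ofReal_add h0 (by linarith)]
  simp

lemma TP_Iio {p z : ℝ} (h0 : 0 ≤ p) (hz : 0 < z) : (TP p z (Iio z)).toReal = p := by
  simp [TP, *]

lemma TP_qStar {p z ρ : ℝ} (h0 : 0 ≤ p) (hp : p < ρ) (hρ : ρ < 1) (hz : 0 < z) :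
    qStar ρ (TP p z) = z := by
  have : {q : ℝ | ρ ≤ (TP p z (Iic q)).toReal} = Ici z := by
    ext x
    simp only [mem_ofPred_eq, mem_Ici]
    constructor
    · intro hx
      by_contra hlt
      push Not at hlt
      rcases lt_or_ge x 0 with h | h
      · rw [TP_Iic_lt h hz] at hx; simp at hx; linarith
      · rw [TP_Iic_mid h hlt, ENNReal.toReal_ofReal h0] at hx; linarith
    · intro hx
      rw [TP_Iic_ge h0 (by linarith) hz hx]; simp; linarith
  rw [qStar, this, csInf_Ici]

lemma TP_good {p z ρ M : ℝ} (h0 : 0 ≤ p) (hp : p < ρ) (hρ : ρ < 1) (hz : 0 < z) (hzM : z ≤ M) :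
    TP p z ∈ GoodDist ρ M := by
  refine ⟨TP_prob h0 (by linarith), ?_, TP_integrable _ _ _, ?_⟩
  · simp [TP, hz.le]
  · rw [TP_qStar h0 hp hρ hz]; exact hzM

lemma TP_ambig {p z ρ M lam : ℝ} (h0 : 0 ≤ p) (hp : p < ρ) (hρ : ρ < 1) (hl : 0 < lam)
    (hz : lam ≤ z) (hzM : z ≤ M) : TP p z ∈ Ambig ρ M (TP p lam) lam := by
  refine ⟨TP_good h0 hp hρ (by linarith) hzM, fun x hx => ?_⟩
  rcases lt_or_ge x 0 with h | h
  · rw [TP_Iic_lt h hl, TP_Iic_lt h (by linarith)]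
  · rw [TP_Iic_mid h hx, TP_Iic_mid h (by linarith)]

lemma Regret_ge1 {b h ρ M lam p q : ℝ} (hb : 0 < b) (hh : 0 < h) (h0 : 0 ≤ p) (hp : p < ρ)
    (hρ : ρ < 1) (hl : 0 < lam) (hlM : lam ≤ M) (hq : q ∈ Icc 0 M) :
    h * (q - lam) ≤ Regret b h ρ M (TP p lam) lam q := by
  have hm : TP p lam ∈ Ambig ρ M (TP p lam) lam := TP_ambig h0 hp hρ hl le_rfl hlM
  refine le_trans ?_ (le_csSup (reg_bddAbove hb hh (h0.trans_lt hp) _ hq) ⟨_, hm, rfl⟩)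
  obtain ⟨hq0, hq1⟩ := hq
  simp only [TP_qStar h0 hp hρ hl, nvCost]
  rw [TP_integral h0 (by linarith), TP_integral h0 (by linarith)]
  rw [max_eq_right (by linarith : 0 - q ≤ 0), max_eq_right (by linarith : 0 - lam ≤ 0),
    max_eq_left (by linarith : 0 ≤ q - 0), max_eq_left (by linarith : 0 ≤ lam - 0)]
  have e1 : 0 ≤ b * max (lam - q) 0 := by positivity
  have e2 : h * (q - lam) ≤ h * max (q - lam) 0 := by gcongr; exact le_max_left _ _
  have e3 : 0 ≤ 1 - p := by linarith
  have := mul_le_mul_of_nonneg_left (add_le_add e1 e2) e3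
  simp only [sub_self, max_self]
  linarith

lemma Regret_ge2 {b h ρ M lam p q : ℝ} (hb : 0 < b) (hh : 0 < h) (h0 : 0 ≤ p) (hp : p < ρ)
    (hρ : ρ < 1) (hl : 0 < lam) (hlM : lam ≤ M) (hq : q ∈ Icc 0 M) :
    (b - (b + h) * p) * (M - q) ≤ Regret b h ρ M (TP p lam) lam q := by
  have hm : TP p M ∈ Ambig ρ M (TP p lam) lam := TP_ambig h0 hp hρ hl hlM le_rfl
  refine le_trans ?_ (le_csSup (reg_bddAbove hb hh (h0.trans_lt hp) _ hq) ⟨_, hm, rfl⟩)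
  obtain ⟨hq0, hq1⟩ := hq
  simp only [TP_qStar h0 hp hρ (hl.trans_le hlM), nvCost]
  rw [TP_integral h0 (by linarith), TP_integral h0 (by linarith)]
  rw [max_eq_right (by linarith : 0 - q ≤ 0), max_eq_right (by linarith : 0 - M ≤ 0),
    max_eq_left (by linarith : 0 ≤ q - 0), max_eq_left (by linarith : 0 ≤ M - 0),
    max_eq_left (by linarith : 0 ≤ M - q), max_eq_right (by linarith : q - M ≤ 0)]
  simp only [sub_self, max_self]
  nlinarith

lemma Regret_le {b h ρ M lam p q B : ℝ} (hb : 0 < b) (hh : 0 < h) (h0 : 0 ≤ p) (hp : p < ρ)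
    (hρ : ρ < 1) (hl : 0 < lam) (hlM : lam ≤ M) (hq : q ∈ Icc lam M) (hpb : (b + h) * p ≤ b)
    (hB1 : h * (q - lam) ≤ B) (hB2 : (b - (b + h) * p) * (M - q) ≤ B) :
    Regret b h ρ M (TP p lam) lam q ≤ B := by
  apply csSup_le
  · exact ⟨_, _, TP_ambig h0 hp hρ hl le_rfl hlM, rfl⟩
  rintro _ ⟨F, hF, rfl⟩
  have hg := hF.1
  have := hg.1
  have hm := qStar_mem (h0.trans_lt hp) hg
  simp only
  have hlow : lam ≤ qStar ρ F := by
    apply le_csInf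
    · have ht := tendsto_measure_Iic_atTop F
      rw [measure_univ] at ht
      have h2 : Filter.Tendsto (fun x => (F (Iic x)).toReal) Filter.atTop (nhds 1) := by
        have h3 := (ENNReal.tendsto_toReal (ENNReal.one_ne_top)).comp ht
        rw [ENNReal.toReal_one] at h3
        exact h3
      obtain ⟨x, hx⟩ := (h2.eventually (lt_mem_nhds hρ)).exists
      exact ⟨x, hx.le⟩
    · intro x hx
      by_contra hlt
      push Not at hlt
      simp only [mem_ofPred_eq] at hx
      rw [hF.2 x hlt] at hx
      rcases lt_or_ge x 0 with h | h
      · rw [TP_Iic_lt h hl] at hx; simp at hx; linarith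
      · rw [TP_Iic_mid h hlt, ENNReal.toReal_ofReal h0] at hx; linarith
  rcases le_total (qStar ρ F) q with hle | hle
  · refine (nv_up hb hh F hg.2.2.1 hle).trans (le_trans ?_ hB1)
    gcongr
  · refine (nv_down hb hh F hg.2.2.1 hle).trans (le_trans ?_ hB2)
    have e : p ≤ (F (Iic q)).toReal := by
      have := hF.2 0 hl
      rw [TP_Iic_mid le_rfl hl] at this
      have h3 : (F (Iic 0)).toReal = p := by rw [this, ENNReal.toReal_ofReal h0]
      rw [← h3]
      exact ENNReal.toReal_mono (by simp) (measure_mono (Iic_subset_Iic.2 (hl.le.trans hq.1)))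
    have e2 : b - (b + h) * (F (Iic q)).toReal ≤ b - (b + h) * p := by gcongr
    have e3 : 0 ≤ b - (b + h) * p := by linarith
    refine (mul_le_mul_of_nonneg_right e2 (sub_nonneg.2 hle)).trans ?_
    gcongr
    exact hm.2

/-- weights -/
noncomputable def wt (p : ℝ) : Bool → ℝ := fun v => if v then p else 1 - p

noncomputable def bm (p : ℝ) : Measure Bool :=
  ENNReal.ofReal p • Measure.dirac true + ENNReal.ofReal (1 - p) • Measure.dirac false

lemma bm_prob {p : ℝ} (h0 : 0 ≤ p) (h1 : p ≤ 1) : IsProbabilityMeasure (bm p) := by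
  constructor
  simp [bm]
  rw [← ENNReal.ofReal_add h0 (by linarith)]
  simp

lemma bm_map (p z : ℝ) : Measure.map (fun v : Bool => if v then (0:ℝ) else z) (bm p) = TP p z := by
  have hm : Measurable (fun v : Bool => if v then (0:ℝ) else z) := measurable_of_countable _
  rw [bm, Measure.map_add _ _ hm, Measure.map_smul, Measure.map_smul, Measure.map_dirac' hm,
    Measure.map_dirac' hm]
  simp [TP]

lemma iid_integral {p z : ℝ} (h0 : 0 ≤ p) (h1 : p ≤ 1) (hz : 0 < z) (N : ℕ)
    (f : (Fin N → ℝ) → ℝ) :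
    ∫ d, f d ∂(iidPi N (TP p z)) =
      ∑ v : Fin N → Bool, (∏ i, wt p (v i)) * f (fun i => if v i then (0:ℝ) else z) := by
  have := bm_prob h0 h1
  have := TP_prob (z := z) h0 h1
  have hm : Measurable (fun v : Bool => if v then (0:ℝ) else z) := measurable_of_countable _
  have hs : SigmaFinite (TP p z) := inferInstance
  have e1 : iidPi N (TP p z) = Measure.pi fun _ => TP p z := by
    unfold iidPi; exact dif_pos hs
  have e2 : (Measure.pi fun _ : Fin N => TP p z) =
      Measure.map (fun (v : Fin N → Bool) i => if v i then (0:ℝ) else z)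
        (Measure.pi fun _ => bm p) := by
    have hsf : SigmaFinite (Measure.map (fun v : Bool => if v then (0:ℝ) else z) (bm p)) := by
      rw [bm_map]; exact hs
    have h3 := Measure.pi_map_pi (ι := Fin N) (μ := fun _ => bm p)
      (f := fun _ (v : Bool) => if v then (0:ℝ) else z) (hμ := fun _ => hsf)
      (fun _ => hm.aemeasurable)
    rw [h3]
    simp only [bm_map]
  have hemb : MeasurableEmbedding (fun (v : Fin N → Bool) i => if v i then (0:ℝ) else z) := by
    refine ⟨?_, ?_, ?_⟩
    · intro u v huv
      funext i
      have := congrFun huv i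
      simp only at this
      cases hu : u i <;> cases hv : v i <;> simp [hu, hv] at this ⊢ <;> linarith
    · exact measurable_pi_lambda _ fun i => hm.comp (measurable_pi_apply i)
    · intro s _
      exact ((Set.toFinite s).image _).measurableSet
  rw [e1, e2, hemb.integral_map, integral_fintype Integrable.of_finite]
  refine Finset.sum_congr rfl fun v _ => ?_
  rw [smul_eq_mul, Measure.real, Measure.pi_singleton, ENNReal.toReal_prod]
  congr 1
  refine Finset.prod_congr rfl fun i _ => ?_
  cases hv : v i
  · simp [bm, wt]; linarith
  · simp [bm, wt, h0]

lemma sum_wt {N : ℕ} (f : Bool → ℝ) :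
    ∑ v : Fin N → Bool, ∏ i, f (v i) = (f true + f false) ^ N := by
  have := Fintype.prod_sum (ι := Fin N) (κ := fun _ => Bool) (fun _ j => f j)
  rw [← this]
  simp

lemma tv_bound {N : ℕ} {p1 p2 : ℝ} (h0 : 0 < p1) (h1 : p1 < 1)
    (hχ : (1 + (p2 - p1) ^ 2 / (p1 * (1 - p1))) ^ N ≤ 5 / 4) :
    ∑ v : Fin N → Bool, |(∏ i, wt p2 (v i)) - ∏ i, wt p1 (v i)| ≤ 1 / 2 := by
  have hw1 : ∀ v, 0 < wt p1 v := by
    intro v; unfold wt; split_ifs <;> linarith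
  have key : ∀ v : Fin N → Bool, |(∏ i, wt p2 (v i)) - ∏ i, wt p1 (v i)| ≤
      (1 / 4) * (∏ i, wt p1 (v i)) + ((∏ i, wt p2 (v i) ^ 2 / wt p1 (v i))
        - 2 * (∏ i, wt p2 (v i)) + (∏ i, wt p1 (v i))) := by
    intro v
    have hW : 0 < ∏ i, wt p1 (v i) := Finset.prod_pos fun i _ => hw1 _
    rw [Finset.prod_div_distrib, Finset.prod_pow]
    set W1 := ∏ i, wt p1 (v i)
    set W2 := ∏ i, wt p2 (v i)
    have e : (1 / 4) * W1 + (W2 ^ 2 / W1 - 2 * W2 + W1) = W1 * (1 / 4 + (W2 / W1 - 1) ^ 2) := by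
      field_simp; ring
    have e2 : W2 - W1 = W1 * (W2 / W1 - 1) := by field_simp
    rw [e, e2, abs_mul, abs_of_pos hW]
    gcongr
    rw [abs_le]
    constructor <;> nlinarith [sq_nonneg (W2 / W1 - 1 - 1/2), sq_nonneg (W2 / W1 - 1 + 1/2)]
  refine (Finset.sum_le_sum fun v _ => key v).trans ?_
  rw [Finset.sum_add_distrib, Finset.sum_add_distrib, Finset.sum_sub_distrib, ← Finset.mul_sum,
    ← Finset.mul_sum, sum_wt, sum_wt, sum_wt (fun x => wt p2 x ^ 2 / wt p1 x)]
  have e : wt p2 true ^ 2 / wt p1 true + wt p2 false ^ 2 / wt p1 false =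
      1 + (p2 - p1) ^ 2 / (p1 * (1 - p1)) := by
    have : 1 - p1 ≠ 0 := by linarith
    simp only [wt, if_true]
    simp
    field_simp
    ring
  rw [e]
  have e1 : ∀ p, wt p true + wt p false = 1 := by intro p; simp [wt]
  rw [e1, e1]
  simp only [one_pow]
  linarith

lemma two_pt {N : ℕ} {D : ℝ} (hD : 0 ≤ D) (W1 W2 l1 l2 g : (Fin N → Bool) → ℝ)
    (h1 : ∀ v, 0 ≤ W1 v) (h2 : ∀ v, 0 ≤ W2 v) (s1 : ∑ v, W1 v = 1) (s2 : ∑ v, W2 v = 1)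
    (htv : ∑ v, |W2 v - W1 v| ≤ 1 / 2) (hg0 : ∀ v, 0 ≤ g v) (hgD : ∀ v, g v ≤ D)
    (hl1 : ∀ v, D - g v ≤ l1 v) (hl2 : ∀ v, g v ≤ l2 v) :
    3 / 4 * D ≤ ∑ v, W1 v * l1 v + ∑ v, W2 v * l2 v := by
  have key : ∀ v, D / 2 * W1 v + D / 2 * W2 v - D / 2 * |W2 v - W1 v| ≤
      W1 v * l1 v + W2 v * l2 v := by
    intro v
    have a1 := mul_le_mul_of_nonneg_left (hl1 v) (h1 v)
    have a2 := mul_le_mul_of_nonneg_left (hl2 v) (h2 v)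
    have a3 : |(W2 v - W1 v) * (g v - D / 2)| ≤ |W2 v - W1 v| * (D / 2) := by
      rw [abs_mul]
      gcongr
      rw [abs_le]
      constructor <;> linarith [hg0 v, hgD v]
    have a4 := (abs_le.1 a3).1
    nlinarith
  rw [← Finset.sum_add_distrib]
  refine le_trans ?_ (Finset.sum_le_sum fun v _ => key v)
  rw [Finset.sum_sub_distrib, Finset.sum_add_distrib, ← Finset.mul_sum, ← Finset.mul_sum,
    ← Finset.mul_sum, s1, s2]
  nlinarith

lemma Risk_TP_le {b h ρ M lam p : ℝ} (hb : 0 < b) (hh : 0 < h) (h0 : 0 ≤ p) (hp : p < ρ)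
    (hρ : ρ < 1) (hl : 0 < lam) (hlM : lam ≤ M) (hpb : b = (b + h) * ρ) :
    Risk b h ρ M (TP p lam) lam ≤ h * ((M - lam) * (ρ - p) / (1 - p)) := by
  have h1p : 0 < 1 - p := by linarith
  have hnn : 0 ≤ (M - lam) * (ρ - p) / (1 - p) :=
    div_nonneg (mul_nonneg (by linarith) (by linarith)) h1p.le
  have hle : (M - lam) * (ρ - p) / (1 - p) ≤ M - lam := by
    rw [div_le_iff₀ h1p]
    gcongr
  have hh' : h = (b + h) * (1 - ρ) := by linarith
  have hG : TP p lam ∈ GoodDist ρ M := TP_good h0 hp hρ hl hlM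
  refine (Risk_le (q := lam + (M - lam) * (ρ - p) / (1 - p)) hb hh (h0.trans_lt hp) hG
    ⟨by linarith, by linarith⟩).trans ?_
  refine Regret_le hb hh h0 hp hρ hl hlM ⟨by linarith, by linarith⟩ ?_ ?_ ?_
  · nlinarith
  · apply le_of_eq; ring
  · apply le_of_eq
    have e : b - (b + h) * p = (b + h) * (ρ - p) := by linarith
    rw [e]
    have e2 : h * ((M - lam) * (ρ - p) / (1 - p)) =
      (b + h) * (1 - ρ) * ((M - lam) * (ρ - p) / (1 - p)) := by rw [← hh']
    rw [e2]
    field_simp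
    ring

set_option maxHeartbeats 1000000

/-- lower bound in the strictly unidentifiable regime. -/
theorem stmt19 (b h M lam ρ : ℝ) (hb : 0 < b) (hh : 0 < h)
    (hlam0 : 0 < lam) (hlam1 : lam < 1) (hM : 1 ≤ M)
    (hρ : ρ = b / (b + h)) (N : ℕ) (hN : 1 ≤ N)
    (π : (Fin N → ℝ) → ℝ) (hmeas : Measurable π) (hrange : ∀ d, π d ∈ Icc (0 : ℝ) M) :
    h * (M - lam) * Real.sqrt (1 - ρ) * min ρ (1 - ρ) * min ρ (3 * ρ - 1) *
        Real.exp (-(1 / 2 : ℝ)) / (64 * Real.sqrt (N : ℝ)) ≤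
      sSup {r : ℝ | ∃ G ∈ GoodDist ρ M, (G (Iio lam)).toReal < ρ ∧
        r = ∫ d, (Regret b h ρ M G lam (π fun i => min (d i) lam)
                    - Risk b h ρ M G lam) ∂(iidPi N G)} := by
  have hs : 0 < b + h := by linarith
  have hρ0 : 0 < ρ := by rw [hρ]; positivity
  have hρ1 : ρ < 1 := by rw [hρ, div_lt_one hs]; linarith
  have hpb : b = (b + h) * ρ := by rw [hρ]; field_simp
  have hhb : h = (b + h) * (1 - ρ) := by linarith
  have hlM : lam < M := by linarith
  have hN1 : (1 : ℝ) ≤ Real.sqrt N := by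
    rw [Real.one_le_sqrt]; exact_mod_cast hN
  have hNpos : 0 < Real.sqrt N := by linarith
  have hNsq : Real.sqrt N ^ 2 = N := Real.sq_sqrt (by positivity)
  set S : Set ℝ := {r : ℝ | ∃ G ∈ GoodDist ρ M, (G (Iio lam)).toReal < ρ ∧
        r = ∫ d, (Regret b h ρ M G lam (π fun i => min (d i) lam)
                    - Risk b h ρ M G lam) ∂(iidPi N G)} with hS
  have hbdd : BddAbove S := by
    refine ⟨2 * ((b + h) * M), ?_⟩
    rintro r ⟨G, hG, -, rfl⟩
    have := hG.1
    have e1 : iidPi N G = Measure.pi fun _ => G := by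
      unfold iidPi; exact dif_pos (inferInstance : SigmaFinite G)
    rw [e1]
    have hle : ∀ d : Fin N → ℝ, ‖Regret b h ρ M G lam (π fun i => min (d i) lam)
                    - Risk b h ρ M G lam‖ ≤ 2 * ((b + h) * M) := by
      intro d
      have hq := hrange fun i => min (d i) lam
      have a1 := Risk_le (lam := lam) hb hh hρ0 hG hq
      have a2 := Risk_ge (lam := lam) hb hh hρ0 (by linarith) hG
      have a3 := (abs_le.1 (Regret_abs (lam := lam) hb hh hρ0 hG hq)).2
      rw [Real.norm_eq_abs, abs_of_nonneg (by linarith)]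
      linarith
    have := norm_integral_le_of_norm_le_const (μ := Measure.pi fun _ : Fin N => G)
      (Filter.Eventually.of_forall hle)
    simp only [probReal_univ, mul_one] at this
    exact (le_abs_self _).trans this
  -- the two hypotheses
  obtain ⟨p1, hp1⟩ : ∃ p1, p1 = ρ / 4 := ⟨_, rfl⟩
  obtain ⟨ε, hε⟩ : ∃ ε, ε = ρ / (8 * Real.sqrt N) := ⟨_, rfl⟩
  have hεpos : 0 < ε := by rw [hε]; positivity
  have hεle : ε ≤ ρ / 8 := by
    rw [hε]; gcongr; linarith
  obtain ⟨p2, hp2⟩ : ∃ p2, p2 = p1 + ε := ⟨_, rfl⟩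
  have a10 : 0 < p1 := by linarith
  have a1ρ : p1 < ρ := by linarith
  have a20 : 0 < p2 := by linarith
  have a2ρ : p2 < ρ := by linarith
  have hmem : ∀ p, 0 < p → p < ρ → (∑ v : Fin N → Bool, (∏ i, wt p (v i)) *
      (Regret b h ρ M (TP p lam) lam (π fun i => min (if v i then (0:ℝ) else lam) lam)
        - Risk b h ρ M (TP p lam) lam)) ∈ S := by
    intro p hp hpρ
    refine ⟨TP p lam, TP_good hp.le hpρ hρ1 hlam0 hlM.le, ?_, ?_⟩
    · rw [TP_Iio hp.le hlam0]; exact hpρ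
    · rw [iid_integral hp.le (by linarith) hlam0]
  have hm1 := le_csSup hbdd (hmem p1 a10 a1ρ)
  have hm2 := le_csSup hbdd (hmem p2 a20 a2ρ)
  -- the chi-square bound
  have hχ : (1 + (p2 - p1) ^ 2 / (p1 * (1 - p1))) ^ N ≤ 5 / 4 := by
    have hNN : (0 : ℝ) < N := by exact_mod_cast hN
    have b1 : (p2 - p1) ^ 2 / (p1 * (1 - p1)) ≤ 1 / (12 * N) := by
      have : p2 - p1 = ε := by linarith
      rw [this, hε, div_pow, mul_pow, hNsq, hp1, div_div, div_le_div_iff₀ (by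
        have : 0 < 1 - ρ / 4 := by linarith
        positivity) (by positivity)]
      have : 12 * ρ ≤ 16 * (1 - ρ / 4) := by linarith
      nlinarith [mul_le_mul_of_nonneg_left this (mul_pos hρ0 hNN).le]
    have b2 : 0 ≤ (p2 - p1) ^ 2 / (p1 * (1 - p1)) :=
      div_nonneg (sq_nonneg _) (mul_nonneg a10.le (by linarith))
    calc (1 + (p2 - p1) ^ 2 / (p1 * (1 - p1))) ^ N ≤ (Real.exp (1 / (12 * N))) ^ N := by
          gcongr
          have := Real.add_one_le_exp (1 / (12 * (N:ℝ)))
          linarith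
      _ = Real.exp (1 / 12) := by
          rw [← Real.exp_nat_mul]; congr 1; field_simp
      _ ≤ 5 / 4 := by
          have := Real.add_one_le_exp (-(1 / 12 : ℝ))
          have h2 : Real.exp (1 / 12) * Real.exp (-(1 / 12)) = 1 := by
            rw [← Real.exp_add]; simp
          nlinarith [Real.exp_pos (1 / 12 : ℝ)]
  have htv := tv_bound a10 (by linarith : p1 < 1) hχ
  obtain ⟨m, hm⟩ : ∃ m, m = min ρ (1 - ρ) := ⟨_, rfl⟩
  have hmρ : m ≤ ρ := hm ▸ min_le_left _ _
  have hmρ' : m ≤ 1 - ρ := hm ▸ min_le_right _ _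
  have hm0 : 0 < m := by rw [hm]; exact lt_min hρ0 (by linarith)
  obtain ⟨c, hc⟩ : ∃ c, c = (b + h) * (m / 2) := ⟨_, rfl⟩
  have hc0 : 0 < c := by rw [hc]; positivity
  obtain ⟨t1, ht1⟩ : ∃ t, t = (M - lam) * (ρ - p1) / (1 - p1) := ⟨_, rfl⟩
  obtain ⟨t2, ht2⟩ : ∃ t, t = (M - lam) * (ρ - p2) / (1 - p2) := ⟨_, rfl⟩
  have hgap : (M - lam) * (1 - ρ) * ε ≤ t1 - t2 := by
    have q1 : 0 < 1 - p1 := by linarith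
    have q2 : 0 < 1 - p2 := by linarith
    have : t1 - t2 = (M - lam) * (1 - ρ) * ε / ((1 - p1) * (1 - p2)) := by
      have : ε = p2 - p1 := by linarith
      rw [ht1, ht2, this]
      field_simp
      ring
    rw [this, le_div_iff₀ (by positivity)]
    have e1 : (1 - p1) * (1 - p2) ≤ 1 :=
      mul_le_one₀ (by linarith) q2.le (by linarith)
    have e2 : 0 ≤ (M - lam) * (1 - ρ) * ε :=
      mul_nonneg (mul_nonneg (by linarith) (by linarith)) hεpos.le
    exact mul_le_of_le_one_right e2 e1
  have hgap0 : 0 ≤ (M - lam) * (1 - ρ) * ε :=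
    mul_nonneg (mul_nonneg (by linarith) (by linarith)) hεpos.le
  obtain ⟨D, hD⟩ : ∃ D, D = c * (t1 - t2) := ⟨_, rfl⟩
  have hD0 : 0 ≤ D := by rw [hD]; exact mul_nonneg hc0.le (by linarith)
  have hmain := two_pt hD0 (fun v : Fin N → Bool => ∏ i, wt p1 (v i)) (fun v => ∏ i, wt p2 (v i))
    (fun v => Regret b h ρ M (TP p1 lam) lam (π fun i => min (if v i then (0:ℝ) else lam) lam)
        - Risk b h ρ M (TP p1 lam) lam)
    (fun v => Regret b h ρ M (TP p2 lam) lam (π fun i => min (if v i then (0:ℝ) else lam) lam)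
        - Risk b h ρ M (TP p2 lam) lam)
    (fun v => max 0 (min D (c * ((π fun i => min (if v i then (0:ℝ) else lam) lam) - lam - t2))))
    (fun v => Finset.prod_nonneg fun i _ => by unfold wt; split_ifs <;> linarith)
    (fun v => Finset.prod_nonneg fun i _ => by unfold wt; split_ifs <;> linarith)
    (by rw [sum_wt]; simp [wt]) (by rw [sum_wt]; simp [wt]) htv
    (fun v => le_max_left _ _) (fun v => max_le hD0 (min_le_left _ _))
    (by
      intro v
      have hq := hrange fun i => min (if v i then (0:ℝ) else lam) lam
      set q := π fun i => min (if v i then (0:ℝ) else lam) lam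
      have g1 := Risk_le (lam := lam) hb hh hρ0 (TP_good a10.le a1ρ hρ1 hlam0 hlM.le) hq
      have g2 := Risk_TP_le hb hh a10.le a1ρ hρ1 hlam0 hlM.le hpb
      have g3 := Regret_ge2 hb hh a10.le a1ρ hρ1 hlam0 hlM.le hq
      rw [← ht1] at g2
      have g4 : c * (t1 + lam - q) ≤ max 0 ((b + h) * (ρ - p1) * (t1 + lam - q)) := by
        rcases le_total 0 (t1 + lam - q) with hx | hx
        · apply le_max_of_le_right
          apply mul_le_mul_of_nonneg_right _ hx
          rw [hc]
          gcongr
          linarith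
        · exact le_max_of_le_left (mul_nonpos_of_nonneg_of_nonpos hc0.le hx)
      have g5 : h * t1 = (b + h) * (ρ - p1) * (M - lam - t1) := by
        have q1 : 1 - p1 ≠ 0 := by linarith
        have : h * t1 = (b + h) * (1 - ρ) * t1 := by rw [← hhb]
        rw [this, ht1]
        field_simp
        ring
      have g6 : b - (b + h) * p1 = (b + h) * (ρ - p1) := by linarith
      rw [g6] at g3
      have g7 : max 0 ((b + h) * (ρ - p1) * (t1 + lam - q)) ≤
          Regret b h ρ M (TP p1 lam) lam q - Risk b h ρ M (TP p1 lam) lam := by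
        apply max_le
        · linarith
        · linarith
      rcases le_total D (c * (q - lam - t2)) with hx | hx
      · rw [min_eq_left hx]
        have := le_max_right 0 D
        linarith
      · rw [min_eq_right hx]
        have := le_max_right 0 (c * (q - lam - t2))
        linarith)
    (by
      intro v
      have hq := hrange fun i => min (if v i then (0:ℝ) else lam) lam
      set q := π fun i => min (if v i then (0:ℝ) else lam) lam
      have g1 := Risk_le (lam := lam) hb hh hρ0 (TP_good a20.le a2ρ hρ1 hlam0 hlM.le) hq
      have g2 := Risk_TP_le hb hh a20.le a2ρ hρ1 hlam0 hlM.le hpb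
      have g3 := Regret_ge1 hb hh a20.le a2ρ hρ1 hlam0 hlM.le hq
      rw [← ht2] at g2
      apply max_le
      · linarith
      · apply (min_le_right _ _).trans
        have hch : c ≤ h := by
          rw [hc]
          refine le_trans ?_ hhb.ge
          apply mul_le_mul_of_nonneg_left _ hs.le
          linarith
        rcases le_total 0 (q - lam - t2) with hx | hx
        · have := mul_le_mul_of_nonneg_right hch hx
          linarith
        · have := mul_nonpos_of_nonneg_of_nonpos hc0.le hx
          linarith)
  have hfin : 3 / 8 * D ≤ sSup S := by linarith
  refine le_trans ?_ hfin
  have hDlow : h * (M - lam) * m * ρ / (16 * Real.sqrt N) ≤ D := by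
    have : h * (M - lam) * m * ρ / (16 * Real.sqrt N) = c * ((M - lam) * (1 - ρ) * ε) := by
      rw [hc, hε]
      have : h * (M - lam) * m * ρ = (b + h) * (1 - ρ) * (M - lam) * m * ρ := by rw [← hhb]
      rw [this]
      field_simp
      ring
    rw [this, hD]
    gcongr
  rw [← hm]
  have hMl : 0 < M - lam := by linarith
  have k1 : Real.sqrt (1 - ρ) ≤ 1 := by
    rw [Real.sqrt_le_one]; linarith
  have k2 : Real.exp (-(1 / 2 : ℝ)) ≤ 1 := by
    rw [Real.exp_le_one_iff]; norm_num
  have k3 : min ρ (3 * ρ - 1) ≤ ρ := min_le_left _ _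
  have k4 : h * (M - lam) * Real.sqrt (1 - ρ) * m * min ρ (3 * ρ - 1) *
        Real.exp (-(1 / 2 : ℝ)) / (64 * Real.sqrt (N : ℝ)) ≤
      h * (M - lam) * m * ρ / (64 * Real.sqrt N) := by
    refine div_le_div_of_nonneg_right ?_ (by positivity)
    calc h * (M - lam) * Real.sqrt (1 - ρ) * m * min ρ (3 * ρ - 1) * Real.exp (-(1 / 2 : ℝ))
        ≤ h * (M - lam) * Real.sqrt (1 - ρ) * m * ρ * Real.exp (-(1 / 2 : ℝ)) := by gcongr
      _ ≤ h * (M - lam) * 1 * m * ρ * 1 := by gcongr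
      _ = h * (M - lam) * m * ρ := by ring
  refine k4.trans ?_
  have k5 : h * (M - lam) * m * ρ / (64 * Real.sqrt N) =
      1 / 4 * (h * (M - lam) * m * ρ / (16 * Real.sqrt N)) := by
    field_simp; ring
  rw [k5]
  linarith
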